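/- On the Weierstrass curve W : y² + xy + (t²+t)²y = x³ + (t²+t)²x² over the rational function field F = 𝔽₂(t), the point (t²(t+1), t⁴(t+1)) is a nonsingular point of order exactly 8 in the group of points of W. -/

import Mathlib

/-- The rational function field `F = 𝔽₂(t)`. -/
noncomputable abbrev F : Type := RatFunc (ZMod 2)

/-- The variable `t` of `𝔽₂(t)`. -/
noncomputable def t : F := RatFunc.X

/-- The Weierstrass curve `W : y² + xy + (t²+t)²y = x³ + (t²+t)²x²` over `𝔽₂(t)`. -/
noncomputable def W : WeierstrassCurve.Affine F :=
  { a₁ := 1, a₂ := (t ^ 2 + t) ^ 2, a₃ := (t ^ 2 + t) ^ 2, a₄ := 0, a₆ := 0 }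

theorem F_two_eq_zero : (2 : F) = 0 := by
  have h : algebraMap (ZMod 2) F 2 = 0 := by
    rw [show (2 : ZMod 2) = 0 from rfl, map_zero]
  rwa [map_ofNat] at h

theorem t_ne_zero : t ≠ 0 := RatFunc.X_ne_zero

theorem t_add_one_ne_zero : t + 1 ≠ 0 := by
  have h : t + 1 = algebraMap (Polynomial (ZMod 2)) F (Polynomial.X + Polynomial.C 1) := by
    simp [t]
  rw [h]
  exact RatFunc.algebraMap_ne_zero (Polynomial.X_add_C_ne_zero 1)

theorem nonsing_one : W.Nonsingular (t ^ 2 * (t + 1)) (t ^ 4 * (t + 1)) := by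
  rw [WeierstrassCurve.Affine.nonsingular_iff]
  have h2 := F_two_eq_zero
  refine ⟨?_, Or.inr ?_⟩
  · rw [WeierstrassCurve.Affine.equation_iff]
    simp only [W]
    grind
  · simp only [W]
    have := t_ne_zero
    have := t_add_one_ne_zero
    have h : t ^ 3 * (t + 1) ≠ 0 := by simp [*]
    grind

theorem nonsing_two : W.Nonsingular 0 ((t ^ 2 + t) ^ 2) := by
  rw [WeierstrassCurve.Affine.nonsingular_iff]
  have h2 := F_two_eq_zero
  refine ⟨?_, Or.inr ?_⟩
  · rw [WeierstrassCurve.Affine.equation_iff]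
    simp only [W]
    grind
  · simp only [W]
    have := t_ne_zero
    have := t_add_one_ne_zero
    have h : (t * (t + 1)) ^ 2 ≠ 0 := by simp [*]
    grind

theorem nonsing_four : W.Nonsingular ((t ^ 2 + t) ^ 2) 0 := by
  rw [WeierstrassCurve.Affine.nonsingular_iff]
  have h2 := F_two_eq_zero
  refine ⟨?_, Or.inl ?_⟩
  · rw [WeierstrassCurve.Affine.equation_iff]
    simp only [W]
    grind
  · simp only [W]
    have := t_ne_zero
    have := t_add_one_ne_zero
    have h : (t * (t + 1)) ^ 4 ≠ 0 := by simp [*]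
    grind

open scoped Classical in
theorem double_one : WeierstrassCurve.Affine.Point.some _ _ nonsing_one +
    WeierstrassCurve.Affine.Point.some _ _ nonsing_one =
    WeierstrassCurve.Affine.Point.some _ _ nonsing_two := by
  have h2 := F_two_eq_zero
  have h0 := t_ne_zero
  have h1 := t_add_one_ne_zero
  have h : t ^ 4 * (t + 1) - W.negY (t ^ 2 * (t + 1)) (t ^ 4 * (t + 1)) = t ^ 3 * (t + 1) := by
    simp only [WeierstrassCurve.Affine.negY, W]
    grind
  have hne : t ^ 3 * (t + 1) ≠ 0 := by simp [*]
  have hy : t ^ 4 * (t + 1) ≠ W.negY (t ^ 2 * (t + 1)) (t ^ 4 * (t + 1)) := by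
    rw [← sub_ne_zero, h]; exact hne
  have hs : W.slope (t ^ 2 * (t + 1)) (t ^ 2 * (t + 1)) (t ^ 4 * (t + 1)) (t ^ 4 * (t + 1))
      = t ^ 2 := by
    rw [WeierstrassCurve.Affine.slope_of_Y_ne rfl hy, h, div_eq_iff hne]
    simp only [W]
    grind
  rw [WeierstrassCurve.Affine.Point.add_self_of_Y_ne hy]
  simp only [WeierstrassCurve.Affine.Point.some.injEq, hs]
  simp only [WeierstrassCurve.Affine.addX, WeierstrassCurve.Affine.addY,
    WeierstrassCurve.Affine.negAddY, WeierstrassCurve.Affine.negY, W]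
  constructor <;> grind

open scoped Classical in
theorem double_two : WeierstrassCurve.Affine.Point.some _ _ nonsing_two +
    WeierstrassCurve.Affine.Point.some _ _ nonsing_two =
    WeierstrassCurve.Affine.Point.some _ _ nonsing_four := by
  have h2 := F_two_eq_zero
  have h0 := t_ne_zero
  have h1 := t_add_one_ne_zero
  have h : (t ^ 2 + t) ^ 2 - W.negY 0 ((t ^ 2 + t) ^ 2) = (t * (t + 1)) ^ 2 := by
    simp only [WeierstrassCurve.Affine.negY, W]
    grind
  have hne : (t * (t + 1)) ^ 2 ≠ 0 := by simp [*]
  have hy : (t ^ 2 + t) ^ 2 ≠ W.negY 0 ((t ^ 2 + t) ^ 2) := by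
    rw [← sub_ne_zero, h]; exact hne
  have hs : W.slope 0 0 ((t ^ 2 + t) ^ 2) ((t ^ 2 + t) ^ 2) = 1 := by
    rw [WeierstrassCurve.Affine.slope_of_Y_ne rfl hy, h, div_eq_iff hne]
    simp only [W]
    grind
  rw [WeierstrassCurve.Affine.Point.add_self_of_Y_ne hy]
  simp only [WeierstrassCurve.Affine.Point.some.injEq, hs]
  simp only [WeierstrassCurve.Affine.addX, WeierstrassCurve.Affine.addY,
    WeierstrassCurve.Affine.negAddY, WeierstrassCurve.Affine.negY, W]
  constructor <;> grind

open scoped Classical in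
theorem double_four : WeierstrassCurve.Affine.Point.some _ _ nonsing_four +
    WeierstrassCurve.Affine.Point.some _ _ nonsing_four = 0 := by
  have h2 := F_two_eq_zero
  apply WeierstrassCurve.Affine.Point.add_self_of_Y_eq
  simp only [WeierstrassCurve.Affine.negY, W]
  grind

open scoped Classical in
/-- On `W : y² + xy + (t²+t)²y = x³ + (t²+t)²x²` over `𝔽₂(t)`, the point
`(t²(t+1), t⁴(t+1))` is a nonsingular point of order exactly 8. -/
theorem point_has_order_eight :
    ∃ h : W.Nonsingular (t ^ 2 * (t + 1)) (t ^ 4 * (t + 1)),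
      addOrderOf (WeierstrassCurve.Affine.Point.some _ _ h) = 8 := by
  refine ⟨nonsing_one, ?_⟩
  have h4 : (2 ^ 2) • WeierstrassCurve.Affine.Point.some _ _ nonsing_one =
      WeierstrassCurve.Affine.Point.some _ _ nonsing_four := by
    rw [pow_two, mul_smul, two_nsmul, two_nsmul, double_one, double_two]
  have h8 : (2 ^ (2 + 1)) • WeierstrassCurve.Affine.Point.some _ _ nonsing_one = 0 := by
    rw [pow_succ', mul_smul, h4, two_nsmul, double_four]
  have := addOrderOf_eq_prime_pow (p := 2) (n := 2)
    (by rw [h4]; exact WeierstrassCurve.Affine.Point.some_ne_zero _) h8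
  simpa using this
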